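/- arXiv:1201.6614 — 2 statements merged into one kernel-verified Lean document; each statement's English description precedes it below -/
import Mathlib

section
/- Let ν be a measure on ℝⁿ satisfying the Lévy measure condition ∫ min(‖x‖², 1) ν(dx) < ∞ and Hypothesis 1: for some ε > 0 and λ > 0, ∫_{‖x‖ ≥ ε} exp(λ‖x‖) ν(dx) < ∞. Then for every multi-index p = (p₁, …, pₙ) ∈ ℕⁿ with total degree |p| = p₁ + ⋯ + pₙ ≥ 2, the monomial function x ↦ x₁^{p₁} ⋯ xₙ^{pₙ} is ν-integrable, i.e. ∫ |x₁^{p₁} ⋯ xₙ^{pₙ}| ν(dx) < ∞. -/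
open MeasureTheory

/-- If a Lévy measure `ν` on `ℝⁿ` satisfies `∫ min(‖x‖², 1) ν(dx) < ∞` and Hypothesis 1
(`∫_{‖x‖ ≥ ε} exp(λ‖x‖) ν(dx) < ∞` for some `ε, λ > 0`), then every monomial of total
degree at least `2` is `ν`-integrable. -/
theorem monomial_integrable_of_levy_measure (n : ℕ)
    (ν : Measure (EuclideanSpace ℝ (Fin n))) [SigmaFinite ν]
    (hLevy : ∫⁻ x, ENNReal.ofReal (min (‖x‖ ^ 2) 1) ∂ν < ⊤)
    (hHyp : ∃ ε > (0 : ℝ), ∃ lam > (0 : ℝ),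
      ∫⁻ x in {x | ε ≤ ‖x‖}, ENNReal.ofReal (Real.exp (lam * ‖x‖)) ∂ν < ⊤)
    (p : Fin n → ℕ) (hp : 2 ≤ ∑ i, p i) :
    Integrable (fun x : EuclideanSpace ℝ (Fin n) => ∏ i, (x i) ^ (p i)) ν := by
  obtain ⟨ε, hε, lam, hlam, hexp⟩ := hHyp
  set k := ∑ i, p i with hk
  have hmeas : Measurable (fun x : EuclideanSpace ℝ (Fin n) => ∏ i, (x i) ^ (p i)) := by
    fun_prop
  have hbound : ∀ x : EuclideanSpace ℝ (Fin n), ‖∏ i, (x i) ^ (p i)‖ ≤ ‖x‖ ^ k := by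
    intro x
    rw [norm_prod, hk, ← Finset.prod_pow_eq_pow_sum]
    refine Finset.prod_le_prod (fun i _ => norm_nonneg _) (fun i _ => ?_)
    rw [norm_pow]
    exact pow_le_pow_left₀ (norm_nonneg _) (PiLp.norm_apply_le x i) _
  have hS : MeasurableSet {x : EuclideanSpace ℝ (Fin n) | ε ≤ ‖x‖} :=
    measurableSet_le measurable_const measurable_norm
  have hA : IntegrableOn (fun x : EuclideanSpace ℝ (Fin n) => Real.exp (lam * ‖x‖))
      {x | ε ≤ ‖x‖} ν := by
    refine ⟨by fun_prop, ?_⟩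
    rw [hasFiniteIntegral_iff_ofReal (Filter.Eventually.of_forall fun x => (Real.exp_pos _).le)]
    exact hexp
  have hB : Integrable (fun x : EuclideanSpace ℝ (Fin n) => min (‖x‖ ^ 2) 1) ν := by
    refine ⟨by fun_prop, ?_⟩
    rw [hasFiniteIntegral_iff_ofReal (Filter.Eventually.of_forall fun x => by positivity)]
    exact hLevy
  rw [← integrableOn_univ, ← Set.union_compl_self {x : EuclideanSpace ℝ (Fin n) | ε ≤ ‖x‖}]
  refine IntegrableOn.union ?_ ?_
  · refine Integrable.mono' (hA.const_mul ((k.factorial : ℝ) / lam ^ k))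
      hmeas.aestronglyMeasurable (Filter.Eventually.of_forall fun x => ?_)
    refine (hbound x).trans ?_
    have h := Real.pow_div_factorial_le_exp (lam * ‖x‖) (by positivity) k
    have hf : (0 : ℝ) < k.factorial := by exact_mod_cast k.factorial_pos
    rw [div_le_iff₀ hf, mul_pow] at h
    rw [div_mul_eq_mul_div, le_div_iff₀ (by positivity)]
    linarith
  · refine Integrable.mono' ((hB.const_mul (1 + ε ^ k)).integrableOn)
      hmeas.aestronglyMeasurable ?_
    filter_upwards [ae_restrict_mem hS.compl] with x hx
    have hx' : ‖x‖ < ε := by simpa using hx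
    refine (hbound x).trans ?_
    have hεk : 0 ≤ ε ^ k := by positivity
    rcases le_total ‖x‖ 1 with h1 | h1
    · have h2 : ‖x‖ ^ k ≤ ‖x‖ ^ 2 := pow_le_pow_of_le_one (norm_nonneg _) h1 hp
      rw [min_eq_left (pow_le_one₀ (norm_nonneg _) h1)]
      nlinarith [sq_nonneg ‖x‖]
    · have h2 : ‖x‖ ^ k ≤ ε ^ k := pow_le_pow_left₀ (norm_nonneg _) hx'.le k
      rw [min_eq_right (one_le_pow₀ h1)]
      linarith
end

section
/- Let μ be a probability measure on ℝⁿ such that ∫ exp(λ‖x‖) μ(dx) < ∞ for some λ > 0. Then the polynomials are dense in L²(μ): the linear span of the equivalence classes of the monomial functions x ↦ x₁^{p₁} ⋯ xₙ^{pₙ}, over all multi-indices p ∈ ℕⁿ, is a dense subspace of the real Hilbert space L²(ℝⁿ, μ). -/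
open MeasureTheory

/-- Two measures for which a random variable has exponential moments near zero and equal
moments give the same value to the complex moment generating function at `I`. -/
lemma complexMGF_I_eq_of_moments {Ω : Type*} [MeasurableSpace Ω] {X : Ω → ℝ}
    {ν₁ ν₂ : Measure Ω} {a : ℝ} (ha : 0 < a)
    (h₁ : ∀ s ∈ Set.Ioo (-a) a, Integrable (fun ω => Real.exp (s * X ω)) ν₁)
    (h₂ : ∀ s ∈ Set.Ioo (-a) a, Integrable (fun ω => Real.exp (s * X ω)) ν₂)
    (hm : ∀ k : ℕ, ∫ ω, X ω ^ k ∂ν₁ = ∫ ω, X ω ^ k ∂ν₂) :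
    ProbabilityTheory.complexMGF X ν₁ Complex.I
      = ProbabilityTheory.complexMGF X ν₂ Complex.I := by
  have s₁ : Set.Ioo (-a) a ⊆ interior (ProbabilityTheory.integrableExpSet X ν₁) :=
    interior_maximal h₁ isOpen_Ioo
  have s₂ : Set.Ioo (-a) a ⊆ interior (ProbabilityTheory.integrableExpSet X ν₂) :=
    interior_maximal h₂ isOpen_Ioo
  have h0 : (0 : ℂ).re ∈ Set.Ioo (-a) a := by simp [ha]
  have a₁ : AnalyticOnNhd ℂ (ProbabilityTheory.complexMGF X ν₁) {z | z.re ∈ Set.Ioo (-a) a} :=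
    fun z hz => ProbabilityTheory.analyticAt_complexMGF (s₁ hz)
  have a₂ : AnalyticOnNhd ℂ (ProbabilityTheory.complexMGF X ν₂) {z | z.re ∈ Set.Ioo (-a) a} :=
    fun z hz => ProbabilityTheory.analyticAt_complexMGF (s₂ hz)
  have hpre : IsPreconnected {z : ℂ | z.re ∈ Set.Ioo (-a) a} := by
    have : Convex ℝ {z : ℂ | z.re ∈ Set.Ioo (-a) a} :=
      (convex_Ioo (-a) a).linear_preimage Complex.reLm
    exact this.isPreconnected
  have hd : ∀ k, iteratedDeriv k (ProbabilityTheory.complexMGF X ν₁) 0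
      = iteratedDeriv k (ProbabilityTheory.complexMGF X ν₂) 0 := by
    intro k
    rw [ProbabilityTheory.iteratedDeriv_complexMGF (s₁ h0),
      ProbabilityTheory.iteratedDeriv_complexMGF (s₂ h0)]
    have e : ∀ ν : Measure Ω, ∫ ω, (X ω : ℂ) ^ k * Complex.exp (0 * X ω) ∂ν
        = ((∫ ω, X ω ^ k ∂ν : ℝ) : ℂ) := by
      intro ν
      rw [← integral_complex_ofReal]
      simp
    rw [e, e, hm]
  have p₁ := (a₁ 0 h0).hasFPowerSeriesAt
  have p₂ := (a₂ 0 h0).hasFPowerSeriesAt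
  simp_rw [hd] at p₁
  have p := p₁.sub p₂
  rw [sub_self] at p
  have hev : ProbabilityTheory.complexMGF X ν₁ =ᶠ[nhds 0] ProbabilityTheory.complexMGF X ν₂ := by
    filter_upwards [p.eventually_eq_zero] with z hz
    exact sub_eq_zero.mp hz
  exact a₁.eqOn_of_preconnected_of_eventuallyEq a₂ hpre h0 hev (by simp [ha])

section

variable {n : ℕ} {μ : Measure (EuclideanSpace ℝ (Fin n))} [IsProbabilityMeasure μ]

lemma memLp_exp_half {lam : ℝ}
    (h : Integrable (fun x : EuclideanSpace ℝ (Fin n) => Real.exp (lam * ‖x‖)) μ) :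
    MemLp (fun x : EuclideanSpace ℝ (Fin n) => Real.exp (lam / 2 * ‖x‖)) 2 μ := by
  rw [memLp_two_iff_integrable_sq (by fun_prop)]
  refine h.congr (Filter.Eventually.of_forall fun x => ?_)
  simp only
  rw [← Real.exp_nat_mul]
  congr 1
  push_cast
  ring

lemma memLp_monomial {c : ℝ} (hc : 0 < c)
    (h : MemLp (fun x : EuclideanSpace ℝ (Fin n) => Real.exp (c * ‖x‖)) 2 μ) (p : Fin n → ℕ) :
    MemLp (fun x : EuclideanSpace ℝ (Fin n) => ∏ i, (x i) ^ (p i)) 2 μ := by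
  set N := ∑ i, p i
  refine MemLp.of_le_mul (c := N.factorial / c ^ N) h
    (by fun_prop) (Filter.Eventually.of_forall fun x => ?_)
  have h1 : ‖∏ i, (x i) ^ (p i)‖ ≤ ‖x‖ ^ N := by
    rw [norm_prod, ← Finset.prod_pow_eq_pow_sum]
    refine Finset.prod_le_prod (fun _ _ => norm_nonneg _) fun i _ => ?_
    rw [norm_pow]
    exact pow_le_pow_left₀ (norm_nonneg _) (PiLp.norm_apply_le x i) _
  have h2 := Real.pow_div_factorial_le_exp (x := c * ‖x‖) (by positivity) N
  rw [Real.norm_of_nonneg (Real.exp_nonneg _)]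
  refine h1.trans ?_
  calc ‖x‖ ^ N = N.factorial / c ^ N * ((c * ‖x‖) ^ N / N.factorial) := by
        have : (N.factorial : ℝ) ≠ 0 := by positivity
        field_simp
        rw [mul_pow, mul_comm]
    _ ≤ _ := by gcongr

lemma integral_mul_eval_eq_zero {g : EuclideanSpace ℝ (Fin n) → ℝ} (hg : MemLp g 2 μ)
    (hmon : ∀ p : Fin n → ℕ, MemLp (fun x : EuclideanSpace ℝ (Fin n) => ∏ i, (x i) ^ (p i)) 2 μ)
    (h0 : ∀ p : Fin n → ℕ, ∫ x, g x * ∏ i, (x i) ^ (p i) ∂μ = 0)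
    (P : MvPolynomial (Fin n) ℝ) :
    Integrable (fun x => g x * MvPolynomial.eval (fun i => x i) P) μ ∧
      ∫ x, g x * MvPolynomial.eval (fun i => x i) P ∂μ = 0 := by
  induction P using MvPolynomial.induction_on' with
  | monomial u a =>
    have e : (fun x : EuclideanSpace ℝ (Fin n) =>
        g x * MvPolynomial.eval (fun i => x i) (MvPolynomial.monomial u a))
        = fun x => a * (g x * ∏ i, (x i) ^ (u i)) := by
      funext x
      rw [MvPolynomial.eval_monomial, Finsupp.prod_fintype _ _ (by simp)]
      ring
    rw [e]
    refine ⟨(hg.integrable_mul (hmon u)).const_mul a, ?_⟩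
    rw [integral_const_mul, h0, mul_zero]
  | add P Q hP hQ =>
    simp only [map_add, mul_add]
    refine ⟨hP.1.add hQ.1, ?_⟩
    rw [integral_add hP.1 hQ.1, hP.2, hQ.2, add_zero]

lemma ae_zero_of_orthogonal {g : EuclideanSpace ℝ (Fin n) → ℝ} (hgm : Measurable g)
    (hg : MemLp g 2 μ) {c : ℝ} (hc : 0 < c)
    (h : MemLp (fun x : EuclideanSpace ℝ (Fin n) => Real.exp (c * ‖x‖)) 2 μ)
    (h0 : ∀ p : Fin n → ℕ, ∫ x, g x * ∏ i, (x i) ^ (p i) ∂μ = 0) :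
    g =ᵐ[μ] 0 := by
  have hmon := memLp_monomial hc h
  have m₁ : Measurable (fun x => (g x).toNNReal) := hgm.real_toNNReal
  have m₂ : Measurable (fun x => (-g x).toNNReal) := hgm.neg.real_toNNReal
  have hgi : Integrable g μ := hg.integrable one_le_two
  have l₁ : MemLp (fun x => ((g x).toNNReal : ℝ)) 2 μ :=
    hg.mono m₁.coe_nnreal_real.aestronglyMeasurable (Filter.Eventually.of_forall fun x => by
      simp only [Real.coe_toNNReal', Real.norm_eq_abs]
      rw [abs_of_nonneg (le_max_right _ _)]
      exact max_le (le_abs_self _) (abs_nonneg _))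
  have l₂ : MemLp (fun x => ((-g x).toNNReal : ℝ)) 2 μ :=
    hg.mono m₂.coe_nnreal_real.aestronglyMeasurable (Filter.Eventually.of_forall fun x => by
      simp only [Real.coe_toNNReal', Real.norm_eq_abs]
      rw [abs_of_nonneg (le_max_right _ _)]
      exact max_le (neg_le_abs _) (abs_nonneg _))
  set ν₁ := μ.withDensity (fun x => ((g x).toNNReal : ENNReal)) with hν₁
  set ν₂ := μ.withDensity (fun x => ((-g x).toNNReal : ENNReal)) with hν₂
  have f₁ : IsFiniteMeasure ν₁ := isFiniteMeasure_withDensity_ofReal hgi.2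
  have f₂ : IsFiniteMeasure ν₂ := isFiniteMeasure_withDensity_ofReal hgi.neg.2
  have key : ν₁ = ν₂ := by
    refine Measure.ext_of_charFun (funext fun t => ?_)
    have e : ∀ ν : Measure (EuclideanSpace ℝ (Fin n)), charFun ν t
        = ProbabilityTheory.complexMGF (fun x => inner ℝ x t) ν Complex.I := by
      intro ν
      rw [charFun_apply, ProbabilityTheory.complexMGF]
      simp only [mul_comm]
    rw [e, e]
    have bd : ∀ s ∈ Set.Ioo (-(c / (‖t‖ + 1))) (c / (‖t‖ + 1)),
        MemLp (fun x : EuclideanSpace ℝ (Fin n) => Real.exp (s * inner ℝ x t)) 2 μ := by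
      intro s hs
      refine h.mono (by fun_prop) (Filter.Eventually.of_forall fun x => ?_)
      rw [Real.norm_of_nonneg (Real.exp_nonneg _), Real.norm_of_nonneg (Real.exp_nonneg _)]
      refine Real.exp_le_exp.mpr ((le_abs_self _).trans ?_)
      rw [abs_mul]
      have hs' : |s| ≤ c / (‖t‖ + 1) := (abs_lt.mpr hs).le
      have hi := abs_real_inner_le_norm x t
      calc |s| * |inner ℝ x t| ≤ c / (‖t‖ + 1) * (‖x‖ * (‖t‖ + 1)) := by
            gcongr
            exact hi.trans (by gcongr; linarith)
        _ = c * ‖x‖ := by field_simp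
    refine complexMGF_I_eq_of_moments (a := c / (‖t‖ + 1)) (by positivity) ?_ ?_ ?_
    · intro s hs
      rw [hν₁, integrable_withDensity_iff_integrable_coe_smul m₁]
      exact l₁.integrable_mul (bd s hs)
    · intro s hs
      rw [hν₂, integrable_withDensity_iff_integrable_coe_smul m₂]
      exact l₂.integrable_mul (bd s hs)
    · intro k
      rw [hν₁, hν₂, integral_withDensity_eq_integral_smul m₁,
        integral_withDensity_eq_integral_smul m₂]
      let P : MvPolynomial (Fin n) ℝ :=
        (∑ i, MvPolynomial.C (t i) * MvPolynomial.X i) ^ k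
      have hP : ∀ x : EuclideanSpace ℝ (Fin n),
          MvPolynomial.eval (fun i => x i) P = inner ℝ x t ^ k := by
        intro x
        simp [P, PiLp.inner_apply]
      have z := integral_mul_eval_eq_zero hg hmon h0 P
      have hmeas : AEStronglyMeasurable (fun x : EuclideanSpace ℝ (Fin n) =>
        inner ℝ x t ^ k) μ := by fun_prop
      simp only [hP] at z
      have i₁ : Integrable (fun x => (g x).toNNReal • inner ℝ x t ^ k) μ := by
        refine z.1.mono (m₁.coe_nnreal_real.aestronglyMeasurable.mul hmeas)
          (Filter.Eventually.of_forall fun x => ?_)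
        rw [NNReal.smul_def, smul_eq_mul, norm_mul, norm_mul]
        gcongr
        simp only [Real.coe_toNNReal', Real.norm_eq_abs]
        rw [abs_of_nonneg (le_max_right _ _)]
        exact max_le (le_abs_self _) (abs_nonneg _)
      have i₂ : Integrable (fun x => (-g x).toNNReal • inner ℝ x t ^ k) μ := by
        refine z.1.mono (m₂.coe_nnreal_real.aestronglyMeasurable.mul hmeas)
          (Filter.Eventually.of_forall fun x => ?_)
        rw [NNReal.smul_def, smul_eq_mul, norm_mul, norm_mul]
        gcongr
        simp only [Real.coe_toNNReal', Real.norm_eq_abs]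
        rw [abs_of_nonneg (le_max_right _ _)]
        exact max_le (neg_le_abs _) (abs_nonneg _)
      rw [← sub_eq_zero, ← integral_sub i₁ i₂, ← z.2]
      refine integral_congr_ae (Filter.Eventually.of_forall fun x => ?_)
      simp only [NNReal.smul_def, smul_eq_mul, ← sub_mul, Real.coe_toNNReal']
      rw [max_zero_sub_max_neg_zero_eq_self]
  have := (withDensity_eq_iff_of_sigmaFinite m₁.coe_nnreal_ennreal.aemeasurable
    m₂.coe_nnreal_ennreal.aemeasurable).mp key
  filter_upwards [this] with x hx
  have hx' : ((g x).toNNReal : ℝ) = ((-g x).toNNReal : ℝ) := by exact_mod_cast hx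
  rw [Real.coe_toNNReal', Real.coe_toNNReal'] at hx'
  have := max_zero_sub_max_neg_zero_eq_self (g x)
  simp only [Pi.zero_apply]
  linarith

end



/-- If a probability measure `μ` on `ℝⁿ` has a finite exponential moment
(`∫ exp(λ‖x‖) μ(dx) < ∞` for some `λ > 0`), then the polynomials are dense in `L²(μ)`:
the span of the (equivalence classes of the) monomials `x ↦ x₁^{p₁} ⋯ xₙ^{pₙ}` over all
multi-indices `p ∈ ℕⁿ` is dense in `L²(ℝⁿ, μ)`. -/
theorem polynomials_dense_in_L2_of_exp_moment (n : ℕ)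
    (μ : Measure (EuclideanSpace ℝ (Fin n))) [IsProbabilityMeasure μ]
    (hexp : ∃ lam > (0 : ℝ), Integrable (fun x : EuclideanSpace ℝ (Fin n) =>
      Real.exp (lam * ‖x‖)) μ) :
    Dense ((Submodule.span ℝ
      {f : Lp ℝ 2 μ | ∃ p : Fin n → ℕ,
        (f : EuclideanSpace ℝ (Fin n) → ℝ) =ᵐ[μ] fun x => ∏ i, (x i) ^ (p i)} :
        Submodule ℝ (Lp ℝ 2 μ)) : Set (Lp ℝ 2 μ)) := by

  obtain ⟨lam, hlam, hint⟩ := hexp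
  have hE := memLp_exp_half hint
  have hc : 0 < lam / 2 := by positivity
  rw [Submodule.dense_iff_topologicalClosure_eq_top, Submodule.topologicalClosure_eq_top_iff,
    Submodule.eq_bot_iff]
  intro g hg
  rw [Lp.eq_zero_iff_ae_eq_zero]
  refine ae_zero_of_orthogonal (Lp.stronglyMeasurable g).measurable (Lp.memLp g) hc hE ?_
  intro p
  have hp := memLp_monomial hc hE p
  have hz := (Submodule.mem_orthogonal _ _).mp hg (hp.toLp _)
    (Submodule.subset_span ⟨p, hp.coeFn_toLp⟩)
  rw [L2.inner_def] at hz
  rw [← hz]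
  refine integral_congr_ae ?_
  filter_upwards [hp.coeFn_toLp] with x hx
  rw [hx]
  simp
end
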